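/- There exist universal constants c₁, c₂, c₃ > 0 such that for every finite weighted graph G=(V,E) and every integer k ≥ 1 with k+1 ≤ |V|: if λ_{k+1} ≥ c₁·k²·√λ_k, then there exists a partition of V into k nonempty sets P_1,…,P_k such that for every 1 ≤ i ≤ k: φ(G[P_i]) ≥ c₂·λ_{k+1}/k and φ_G(P_i) ≤ c₃·k³·√λ_k. -/

import Mathlib

open Finset

/-- Weighted degree of a vertex. -/
noncomputable def deg {V : Type*} [Fintype V] (w : V → V → ℝ) (v : V) : ℝ :=
  ∑ u, w v u

/-- Volume of a set of vertices. -/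
noncomputable def vol {V : Type*} [Fintype V] (w : V → V → ℝ) (S : Finset V) : ℝ :=
  ∑ v ∈ S, deg w v

/-- Total weight of edges from `S` to `T \ S`. -/
noncomputable def eW {V : Type*} [DecidableEq V] (w : V → V → ℝ) (S T : Finset V) : ℝ :=
  ∑ u ∈ S, ∑ v ∈ T \ S, w u v

/-- Conductance of `S` in `G`. -/
noncomputable def phi {V : Type*} [Fintype V] [DecidableEq V] (w : V → V → ℝ)
    (S : Finset V) : ℝ :=
  eW w S Finset.univ / vol w S

/-- Volume of `S ⊆ P` inside the induced subgraph `G[P]`. -/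
noncomputable def volIn {V : Type*} [DecidableEq V] (w : V → V → ℝ) (P S : Finset V) : ℝ :=
  ∑ v ∈ S, ∑ u ∈ P, w v u

/-- `φ(G[P]) ≥ a` : every nonempty proper `S ⊊ P` with at most half of the induced volume
has induced conductance at least `a` (stated multiplicatively). -/
def inCondGE {V : Type*} [DecidableEq V] (w : V → V → ℝ) (P : Finset V) (a : ℝ) : Prop :=
  ∀ S : Finset V, S ⊆ P → S.Nonempty → S ≠ P →
    volIn w P S ≤ volIn w P P / 2 → a * volIn w P S ≤ eW w S P

/-- `ρ(k)`: the minimum over families of `k` pairwise disjoint nonempty subsets of the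
maximum conductance. -/
noncomputable def rho {V : Type*} [Fintype V] [DecidableEq V] (w : V → V → ℝ) (k : ℕ) : ℝ :=
  sInf { r | ∃ A : Fin k → Finset V, (∀ i, (A i).Nonempty) ∧
    (∀ i j, i ≠ j → Disjoint (A i) (A j)) ∧ r = ⨆ i, phi w (A i) }

/-- The normalized Laplacian `I - D^{-1/2} A D^{-1/2}`. -/
noncomputable def normLap {V : Type*} [Fintype V] [DecidableEq V] (w : V → V → ℝ) : Matrix V V ℝ :=
  1 - Matrix.of fun u v => w u v / (Real.sqrt (deg w u) * Real.sqrt (deg w v))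

/-- `lam w k` is the `k`-th smallest eigenvalue (1-indexed) of the normalized Laplacian. -/
noncomputable def lam {V : Type*} [Fintype V] [DecidableEq V] (w : V → V → ℝ) (k : ℕ) : ℝ :=
  if h : (normLap w).IsHermitian then
    ((Finset.univ.val.map h.eigenvalues).sort (· ≤ ·)).getD (k - 1) 0
  else 0

/-!
Let `ρ(k)` be the least `r` for which there are `k` disjoint nonempty sets of conductance at most
`r`. Choose `k` such sets, the cores, minimal under inclusion for `r = ρ(k)`. If
`ρ(k + 1) ≥ (1 + ε) ρ(k)`, then every set outside of the cores, and one of the two pieces of every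
splitting of a core, has conductance at least `ρ(k + 1)`, since otherwise there would be `k + 1`
sets of smaller conductance; by minimality the other piece has conductance above `ρ(k)`, so much
of the boundary of the first piece lies inside the core. Among the partitions into `k` parts
containing one core each, take one with the largest total weight inside the parts. No set outside
of the cores is then joined to another part more heavily than to its own, so each part has
conductance at most `k ρ(k)` and expansion at least `ε ρ(k + 1) / (8 k)`.

Cheeger's inequality turns this into statements about eigenvalues. Test functions that are
constant on the members of a packing give `λ_k ≤ 2 ρ(k)`. Conversely, by Cheeger's inequality in
each part, a partition into `j` parts of expansion `α` forces `λ_{j+1} ≥ α² / 2`. So for each `j`,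
either `ρ(j + 1) ≤ (1 + ε) ρ(j)` or `ρ(j + 1) ≤ 12 (j / ε) √λ_{j+1}`. Chaining these alternatives
from `ρ(1) = 0` with `ε = 1 / k`, where `(1 + 1 / k) ^ k ≤ 3`, gives `ρ(k) ≤ 36 k² √λ_k`. Under
the hypothesis of the theorem, therefore, `ρ(k + 1) ≥ 2 ρ(k)`, and the partition for `ε = 1` is
the one sought.
-/

section SortedLists

variable {α : Type*} [LinearOrder α] {l : List α} {i : ℕ}

lemma countP_lt_getElem_le (hl : l.Pairwise (· ≤ ·)) (hi : i < l.length) :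
    l.countP (· < l[i]) ≤ i := by
  have hdrop : (l.drop i).countP (· < l[i]) = 0 := by
    rw [List.countP_eq_zero]
    intro a ha
    obtain ⟨j, hj, rfl⟩ := List.mem_drop_iff_getElem.1 ha
    simpa [add_comm] using hl.rel_get_of_le (a := ⟨i, hi⟩) (b := ⟨j + i, by omega⟩) (by simp)
  calc l.countP (· < l[i]) = (l.take i).countP (· < l[i]) + (l.drop i).countP (· < l[i]) := by
        rw [← List.countP_append, List.take_append_drop]
    _ ≤ i := by
        rw [hdrop, add_zero]
        exact List.countP_le_length.trans (List.length_take_le i l)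

lemma lt_countP_le_getElem (hl : l.Pairwise (· ≤ ·)) (hi : i < l.length) :
    i < l.countP (· ≤ l[i]) := by
  have htake : (l.take (i + 1)).countP (· ≤ l[i]) = (l.take (i + 1)).length := by
    rw [List.countP_eq_length]
    intro a ha
    obtain ⟨j, hj, rfl⟩ := List.mem_take_iff_getElem.1 ha
    simpa using hl.rel_get_of_le (a := ⟨j, by omega⟩) (b := ⟨i, hi⟩) (by simp; omega)
  have hlen : (l.take (i + 1)).length = i + 1 := by rw [List.length_take]; omega
  have hle := (List.take_sublist (i + 1) l).countP_le (p := (· ≤ l[i]))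
  omega

end SortedLists

lemma exists_ne_zero_map_eq_zero_of_card_lt {K ι E F : Type*} [DivisionRing K]
    [AddCommGroup E] [Module K E] [AddCommGroup F] [Module K F] [FiniteDimensional K F]
    (a : E →ₗ[K] F) (J : Finset ι) (b : ι → E →ₗ[K] K)
    (h : Module.finrank K F + #J < Module.finrank K E) :
    ∃ x ≠ 0, a x = 0 ∧ ∀ i ∈ J, b i x = 0 := by
  have : FiniteDimensional K E := .of_finrank_pos (by omega)
  have hker := LinearMap.ker_ne_bot_of_finrank_lt
    (f := a.prod (LinearMap.pi fun i : J => b i)) (by simpa using h)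
  obtain ⟨x, hx, hx0⟩ := (Submodule.ne_bot_iff _).1 hker
  obtain ⟨hax, hbx⟩ := Prod.ext_iff.1 (LinearMap.mem_ker.1 hx)
  exact ⟨x, hx0, hax, fun i hi => congrFun hbx ⟨i, hi⟩⟩

section CourantFischer

variable {n E F : Type*} [Fintype n] [DecidableEq n] {A : Matrix n n ℝ}
  [AddCommGroup E] [Module ℝ E] [AddCommGroup F] [Module ℝ F]

/-- The linear functional `x ↦ ⟨bᵢ, x⟩`, where `bᵢ` is the unit eigenvector for
`hA.eigenvalues i`. -/
noncomputable def eigenCoord (hA : A.IsHermitian) (i : n) : (n → ℝ) →ₗ[ℝ] ℝ :=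
  dotProductBilin ℝ ℝ (hA.eigenvectorBasis i : n → ℝ)

lemma eigenCoord_apply (hA : A.IsHermitian) (i : n) (x : n → ℝ) :
    eigenCoord hA i x = inner ℝ (hA.eigenvectorBasis i) (WithLp.toLp 2 x) := by
  simp [eigenCoord, EuclideanSpace.inner_eq_star_dotProduct, dotProduct_comm]

lemma eigenCoord_mulVec (hA : A.IsHermitian) (i : n) (x : n → ℝ) :
    eigenCoord hA i (A.mulVec x) = hA.eigenvalues i * eigenCoord hA i x := by
  have hT : A.transpose = A := A.conjTranspose_eq_transpose_of_trivial.symm.trans hA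
  simp only [eigenCoord, dotProductBilin_apply_apply]
  rw [Matrix.dotProduct_mulVec, ← Matrix.mulVec_transpose, hT, hA.mulVec_eigenvectorBasis,
    smul_dotProduct, smul_eq_mul]

lemma sum_eigenCoord_mul_eigenCoord (hA : A.IsHermitian) (x y : n → ℝ) :
    ∑ i, eigenCoord hA i x * eigenCoord hA i y = x ⬝ᵥ y := by
  have := hA.eigenvectorBasis.sum_inner_mul_inner (WithLp.toLp 2 x) (WithLp.toLp 2 y)
  simp only [eigenCoord_apply]
  simpa [real_inner_comm, EuclideanSpace.inner_toLp_toLp, dotProduct_comm] using this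

lemma dotProduct_mulVec_eq_sum_eigenvalues (hA : A.IsHermitian) (x : n → ℝ) :
    x ⬝ᵥ A.mulVec x = ∑ i, hA.eigenvalues i * eigenCoord hA i x ^ 2 := by
  rw [← sum_eigenCoord_mul_eigenCoord hA]
  exact Finset.sum_congr rfl fun i _ => by rw [eigenCoord_mulVec]; ring

lemma dotProduct_self_eq_sum_eigenCoord (hA : A.IsHermitian) (x : n → ℝ) :
    x ⬝ᵥ x = ∑ i, eigenCoord hA i x ^ 2 := by
  simp only [← sum_eigenCoord_mul_eigenCoord hA, sq]

lemma exists_le_rayleigh_of_card_lt (hA : A.IsHermitian) (T : E →ₗ[ℝ] n → ℝ) (t : ℝ)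
    (h : #{i | hA.eigenvalues i < t} < Module.finrank ℝ E) :
    ∃ x ≠ 0, t * (T x ⬝ᵥ T x) ≤ T x ⬝ᵥ A.mulVec (T x) := by
  obtain ⟨x, hx0, -, hx⟩ := exists_ne_zero_map_eq_zero_of_card_lt (0 : E →ₗ[ℝ] Fin 0 → ℝ)
    _ (fun i => (eigenCoord hA i).comp T) (by simpa using h)
  refine ⟨x, hx0, ?_⟩
  rw [dotProduct_mulVec_eq_sum_eigenvalues hA, dotProduct_self_eq_sum_eigenCoord hA, mul_sum]
  refine sum_le_sum fun i _ => ?_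
  rcases lt_or_ge (hA.eigenvalues i) t with hi | hi
  · have : eigenCoord hA i (T x) = 0 := hx i (by simpa using hi)
    simp [this]
  · gcongr

lemma exists_rayleigh_le_of_card_lt [FiniteDimensional ℝ F] (hA : A.IsHermitian)
    (T : E →ₗ[ℝ] n → ℝ) (a : E →ₗ[ℝ] F) (t : ℝ)
    (h : Module.finrank ℝ F + #{i | t < hA.eigenvalues i} < Module.finrank ℝ E) :
    ∃ x ≠ 0, a x = 0 ∧ T x ⬝ᵥ A.mulVec (T x) ≤ t * (T x ⬝ᵥ T x) := by
  obtain ⟨x, hx0, hax, hx⟩ := exists_ne_zero_map_eq_zero_of_card_lt a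
    _ (fun i => (eigenCoord hA i).comp T) h
  refine ⟨x, hx0, hax, ?_⟩
  rw [dotProduct_mulVec_eq_sum_eigenvalues hA, dotProduct_self_eq_sum_eigenCoord hA, mul_sum]
  refine sum_le_sum fun i _ => ?_
  rcases lt_or_ge t (hA.eigenvalues i) with hi | hi
  · have : eigenCoord hA i (T x) = 0 := hx i (by simpa using hi)
    simp [this]
  · gcongr

end CourantFischer

section Spectrum

variable {V : Type*} [Fintype V] {w : V → V → ℝ}

/-- The squared norm of `f` on `P`, where each vertex is weighted by its degree in the whole
graph, as in the Rayleigh quotient of the normalized Laplacian. -/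
noncomputable def normSq (w : V → V → ℝ) (P : Finset V) (f : V → ℝ) : ℝ :=
  ∑ v ∈ P, deg w v * f v ^ 2

/-- The Dirichlet energy of `f` on the induced subgraph on `P`; the factor `1 / 2` makes each
edge count once. -/
noncomputable def dirichlet (w : V → V → ℝ) (P : Finset V) (f : V → ℝ) : ℝ :=
  (∑ u ∈ P, ∑ v ∈ P, w u v * (f u - f v) ^ 2) / 2

lemma normSq_univ_pos (hd : ∀ v, 0 < deg w v) {f : V → ℝ} (hf : f ≠ 0) :
    0 < normSq w univ f := by
  obtain ⟨v, hv⟩ := Function.ne_iff.1 hf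
  exact sum_pos' (fun u _ => mul_nonneg (hd u).le (sq_nonneg _))
    ⟨v, mem_univ v, mul_pos (hd v) (sq_pos_of_ne_zero hv)⟩

lemma dirichlet_univ_eq (hs : ∀ u v, w u v = w v u) (f : V → ℝ) :
    dirichlet w univ f = normSq w univ f - ∑ u, ∑ v, w u v * (f u * f v) := by
  have hleft : ∑ u, ∑ v, w u v * f u ^ 2 = normSq w univ f := by
    simp only [normSq, deg, sum_mul]
  have hright : ∑ u, ∑ v, w u v * f v ^ 2 = normSq w univ f := by
    rw [← hleft, sum_comm]
    simp only [hs]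
  have hexpand : ∑ u, ∑ v, w u v * (f u - f v) ^ 2 = ∑ u, ∑ v, w u v * f u ^ 2
      + ∑ u, ∑ v, w u v * f v ^ 2 - 2 * ∑ u, ∑ v, w u v * (f u * f v) := by
    simp only [mul_sum, ← sum_add_distrib, ← sum_sub_distrib]
    exact sum_congr rfl fun u _ => sum_congr rfl fun v _ => by ring
  rw [dirichlet, hexpand, hleft, hright]
  ring

/-- Multiplication by `D ^ (1 / 2)`, the substitution turning the Rayleigh quotient of the
normalized Laplacian into `dirichlet / normSq`. -/
noncomputable def sqrtDegMul (w : V → V → ℝ) : (V → ℝ) →ₗ[ℝ] V → ℝ :=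
  LinearMap.mulLeft ℝ fun v => √(deg w v)

lemma sqrtDegMul_dotProduct_self (hd : ∀ v, 0 < deg w v) (f : V → ℝ) :
    sqrtDegMul w f ⬝ᵥ sqrtDegMul w f = normSq w univ f := by
  refine sum_congr rfl fun v _ => ?_
  have := Real.mul_self_sqrt (hd v).le
  simp only [sqrtDegMul, LinearMap.mulLeft_apply, Pi.mul_apply]
  linear_combination f v ^ 2 * this

variable [DecidableEq V]

lemma sqrtDegMul_dotProduct_normLap_mulVec (hs : ∀ u v, w u v = w v u)
    (hd : ∀ v, 0 < deg w v) (f : V → ℝ) :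
    sqrtDegMul w f ⬝ᵥ (normLap w).mulVec (sqrtDegMul w f) = dirichlet w univ f := by
  rw [normLap, Matrix.sub_mulVec, Matrix.one_mulVec, dotProduct_sub,
    sqrtDegMul_dotProduct_self hd, dirichlet_univ_eq hs]
  congr 1
  simp only [dotProduct, Matrix.mulVec, Matrix.of_apply, mul_sum]
  refine sum_congr rfl fun u _ => sum_congr rfl fun v _ => ?_
  have hu := Real.sqrt_pos.2 (hd u)
  have hv := Real.sqrt_pos.2 (hd v)
  simp only [sqrtDegMul, LinearMap.mulLeft_apply, Pi.mul_apply]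
  field_simp

lemma normLap_isHermitian (hs : ∀ u v, w u v = w v u) : (normLap w).IsHermitian := by
  refine Matrix.isHermitian_one.sub ?_
  ext u v
  simp [hs u v, mul_comm]

variable {k : ℕ}

lemma exists_sorted_eigenvalues (hs : ∀ u v, w u v = w v u) (hk : 1 ≤ k)
    (hkV : k ≤ Fintype.card V) :
    ∃ (l : List ℝ) (h : k - 1 < l.length), l.Pairwise (· ≤ ·) ∧ lam w k = l[k - 1] ∧
      (l : Multiset ℝ) = univ.val.map (normLap_isHermitian hs).eigenvalues := by
  refine ⟨_, ?_, Multiset.pairwise_sort _ (· ≤ ·), ?_, Multiset.sort_eq _ _⟩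
  · simp; omega
  · rw [lam, dif_pos (normLap_isHermitian hs), List.getD_eq_getElem]

lemma card_eigenvalues_lt_lam (hs : ∀ u v, w u v = w v u) (hk : 1 ≤ k)
    (hkV : k ≤ Fintype.card V) :
    #{i | (normLap_isHermitian hs).eigenvalues i < lam w k} < k := by
  obtain ⟨l, hl, hsort, hlam, hmap⟩ := exists_sorted_eigenvalues hs hk hkV
  have hcount := countP_lt_getElem_le hsort hl
  rw [← hlam, ← Multiset.coe_countP, hmap, Multiset.countP_map] at hcount
  exact lt_of_le_of_lt hcount (by omega)

lemma le_card_eigenvalues_le_lam (hs : ∀ u v, w u v = w v u) (hk : 1 ≤ k)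
    (hkV : k ≤ Fintype.card V) :
    k ≤ #{i | (normLap_isHermitian hs).eigenvalues i ≤ lam w k} := by
  obtain ⟨l, hl, hsort, hlam, hmap⟩ := exists_sorted_eigenvalues hs hk hkV
  have hcount := lt_countP_le_getElem hsort hl
  rw [← hlam, ← Multiset.coe_countP, hmap, Multiset.countP_map] at hcount
  exact (by omega : k ≤ k - 1 + 1).trans hcount

lemma exists_lam_mul_normSq_le_dirichlet {E : Type*} [AddCommGroup E] [Module ℝ E]
    (hs : ∀ u v, w u v = w v u) (hd : ∀ v, 0 < deg w v) (hk : 1 ≤ k) (hkV : k ≤ Fintype.card V)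
    (T : E →ₗ[ℝ] V → ℝ) (hE : k ≤ Module.finrank ℝ E) :
    ∃ x ≠ 0, lam w k * normSq w univ (T x) ≤ dirichlet w univ (T x) := by
  simpa only [LinearMap.comp_apply, sqrtDegMul_dotProduct_self hd,
    sqrtDegMul_dotProduct_normLap_mulVec hs hd] using
    exists_le_rayleigh_of_card_lt (normLap_isHermitian hs) (sqrtDegMul w ∘ₗ T) (lam w k)
      ((card_eigenvalues_lt_lam hs hk hkV).trans_le hE)

lemma exists_dirichlet_le_lam_mul_normSq {F : Type*} [AddCommGroup F] [Module ℝ F]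
    [FiniteDimensional ℝ F] (hs : ∀ u v, w u v = w v u) (hd : ∀ v, 0 < deg w v)
    (hkV : k ≤ Fintype.card V) (a : (V → ℝ) →ₗ[ℝ] F) (hF : Module.finrank ℝ F < k) :
    ∃ f ≠ 0, a f = 0 ∧ dirichlet w univ f ≤ lam w k * normSq w univ f := by
  have hcard := card_filter_add_card_filter_not (s := univ)
    fun i => (normLap_isHermitian hs).eigenvalues i ≤ lam w k
  have hle := le_card_eigenvalues_le_lam hs (by omega) hkV
  simp only [not_le, card_univ] at hcard
  simpa only [sqrtDegMul_dotProduct_self hd, sqrtDegMul_dotProduct_normLap_mulVec hs hd] using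
    exists_rayleigh_le_of_card_lt (normLap_isHermitian hs) (sqrtDegMul w) a (lam w k)
      (by rw [Module.finrank_fintype_fun_eq_card]; omega)

lemma lam_mono (hs : ∀ u v, w u v = w v u) {j : ℕ} (hk : 1 ≤ k) (hkj : k ≤ j)
    (hj : j ≤ Fintype.card V) : lam w k ≤ lam w j := by
  by_contra! hlt
  have hsub : #{i | (normLap_isHermitian hs).eigenvalues i ≤ lam w j}
      ≤ #{i | (normLap_isHermitian hs).eigenvalues i < lam w k} :=
    card_le_card (monotone_filter_right _ fun i _ hi => hi.trans_lt hlt)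
  have hlow := card_eigenvalues_lt_lam hs hk (hkj.trans hj)
  have hhigh := le_card_eigenvalues_le_lam hs (hk.trans hkj) hj
  omega

end Spectrum

section CrossWeight

variable {V : Type*} {w : V → V → ℝ}

lemma vol_pos [Fintype V] (hd : ∀ v, 0 < deg w v) {S : Finset V} (hS : S.Nonempty) :
    0 < vol w S :=
  sum_pos (fun v _ => hd v) hS

lemma vol_nonneg [Fintype V] (hd : ∀ v, 0 < deg w v) (S : Finset V) : 0 ≤ vol w S :=
  sum_nonneg fun v _ => (hd v).le

/-- The total weight of the pairs in `S × T`; unlike in `eW`, the sets may overlap, and pairs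
inside `S ∩ T` count in both orders. -/
def crossWeight (w : V → V → ℝ) (S T : Finset V) : ℝ :=
  ∑ u ∈ S, ∑ v ∈ T, w u v

lemma crossWeight_comm (hs : ∀ u v, w u v = w v u) (S T : Finset V) :
    crossWeight w S T = crossWeight w T S := by
  rw [crossWeight, sum_comm]
  simp only [crossWeight, hs]

lemma crossWeight_nonneg (hn : ∀ u v, 0 ≤ w u v) (S T : Finset V) : 0 ≤ crossWeight w S T :=
  sum_nonneg fun u _ => sum_nonneg fun v _ => hn u v

lemma crossWeight_mono (hn : ∀ u v, 0 ≤ w u v) {S S' T T' : Finset V} (hS : S ⊆ S')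
    (hT : T ⊆ T') : crossWeight w S T ≤ crossWeight w S' T' :=
  (sum_le_sum fun u _ => sum_le_sum_of_subset_of_nonneg hT fun v _ _ => hn u v).trans
    (sum_le_sum_of_subset_of_nonneg hS fun u _ _ => sum_nonneg fun v _ => hn u v)

variable [DecidableEq V]

lemma crossWeight_union_left {S T : Finset V} (h : Disjoint S T) (U : Finset V) :
    crossWeight w (S ∪ T) U = crossWeight w S U + crossWeight w T U :=
  sum_union h

lemma crossWeight_union_right (U : Finset V) {S T : Finset V} (h : Disjoint S T) :
    crossWeight w U (S ∪ T) = crossWeight w U S + crossWeight w U T := by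
  simp only [crossWeight, sum_union h, sum_add_distrib]

lemma crossWeight_union_self (hs : ∀ u v, w u v = w v u) {S T : Finset V} (h : Disjoint S T) :
    crossWeight w (S ∪ T) (S ∪ T)
      = crossWeight w S S + crossWeight w T T + 2 * crossWeight w S T := by
  rw [crossWeight_union_left h, crossWeight_union_right S h, crossWeight_union_right T h,
    crossWeight_comm hs T S]
  ring

lemma eW_eq_crossWeight (S T : Finset V) : eW w S T = crossWeight w S (T \ S) :=
  rfl

lemma eW_nonneg (hn : ∀ u v, 0 ≤ w u v) (S T : Finset V) : 0 ≤ eW w S T :=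
  crossWeight_nonneg hn S (T \ S)

lemma eW_sdiff_self (hs : ∀ u v, w u v = w v u) {S P : Finset V} (hS : S ⊆ P) :
    eW w (P \ S) P = eW w S P := by
  rw [eW_eq_crossWeight, Finset.sdiff_sdiff_eq_self hS, crossWeight_comm hs, eW_eq_crossWeight]

lemma eW_eq_crossWeight_of_disjoint {S T : Finset V} (h : Disjoint S T) :
    eW w S T = crossWeight w S T := by
  rw [eW_eq_crossWeight, sdiff_eq_self_of_disjoint h.symm]

variable [Fintype V]

lemma vol_union {S T : Finset V} (h : Disjoint S T) : vol w (S ∪ T) = vol w S + vol w T :=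
  sum_union h

lemma volIn_le_vol (hn : ∀ u v, 0 ≤ w u v) (P S : Finset V) : volIn w P S ≤ vol w S :=
  crossWeight_mono hn Subset.rfl (subset_univ P)

lemma crossWeight_le_eW_univ (hn : ∀ u v, 0 ≤ w u v) {S T : Finset V} (h : Disjoint S T) :
    crossWeight w S T ≤ eW w S univ :=
  crossWeight_mono hn Subset.rfl (subset_sdiff.2 ⟨subset_univ T, h.symm⟩)

lemma eW_union_univ (hs : ∀ u v, w u v = w v u) {S T : Finset V} (h : Disjoint S T) :
    eW w (S ∪ T) univ = eW w S univ + eW w T univ - 2 * crossWeight w S T := by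
  have hS : univ \ S = T ∪ univ \ (S ∪ T) := by
    grind [Finset.disjoint_left]
  have hT : univ \ T = S ∪ univ \ (S ∪ T) := by
    grind [Finset.disjoint_left]
  have hS' : Disjoint S (univ \ (S ∪ T)) := disjoint_sdiff.mono_left subset_union_left
  have hT' : Disjoint T (univ \ (S ∪ T)) := disjoint_sdiff.mono_left subset_union_right
  simp only [eW_eq_crossWeight]
  rw [hS, hT, crossWeight_union_left h, crossWeight_union_right S hT',
    crossWeight_union_right T hS', crossWeight_comm hs T S]
  ring

lemma phi_nonneg (hn : ∀ u v, 0 ≤ w u v) (hd : ∀ v, 0 < deg w v) (S : Finset V) :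
    0 ≤ phi w S :=
  div_nonneg (eW_nonneg hn S univ) (vol_nonneg hd S)

lemma le_phi_iff (hd : ∀ v, 0 < deg w v) {S : Finset V} (hS : S.Nonempty) {r : ℝ} :
    r ≤ phi w S ↔ r * vol w S ≤ eW w S univ :=
  le_div_iff₀ (vol_pos hd hS)

lemma phi_le_iff (hd : ∀ v, 0 < deg w v) {S : Finset V} (hS : S.Nonempty) {r : ℝ} :
    phi w S ≤ r ↔ eW w S univ ≤ r * vol w S :=
  div_le_iff₀ (vol_pos hd hS)

end CrossWeight

section Packing

variable {V ι : Type*}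

/-- A family of pairwise disjoint nonempty sets, as in the definition of `rho`. -/
structure IsPacking (A : ι → Finset V) : Prop where
  nonempty : ∀ i, (A i).Nonempty
  disjoint : ∀ ⦃i j⦄, i ≠ j → Disjoint (A i) (A j)

lemma IsPacking.update [DecidableEq ι] {A : ι → Finset V} (hA : IsPacking A) (i : ι)
    {B : Finset V} (hB : B.Nonempty) (hdisj : ∀ j ≠ i, Disjoint B (A j)) :
    IsPacking (Function.update A i B) where
  nonempty j := by
    by_cases hj : j = i
    · simpa [hj] using hB
    · simpa [hj] using hA.nonempty j
  disjoint j l hjl := by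
    by_cases hj : j = i <;> by_cases hl : l = i
    · exact absurd (hj.trans hl.symm) hjl
    · simpa [hj, hl] using hdisj l hl
    · simpa [hj, hl] using (hdisj j hj).symm
    · simpa [hj, hl] using hA.disjoint hjl

lemma IsPacking.cons {k : ℕ} {A : Fin k → Finset V} (hA : IsPacking A) {B : Finset V}
    (hB : B.Nonempty) (hdisj : ∀ i, Disjoint B (A i)) :
    IsPacking (Fin.cons B A : Fin (k + 1) → Finset V) where
  nonempty := Fin.cases hB hA.nonempty
  disjoint := by
    intro i j
    refine Fin.cases (Fin.cases (absurd rfl) (fun j _ => hdisj j) j) (fun i => ?_) i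
    exact Fin.cases (fun _ => (hdisj i).symm)
      (fun j hij => hA.disjoint (ne_of_apply_ne Fin.succ hij)) j

lemma exists_isPacking [Fintype V] {k : ℕ} (hk : k ≤ Fintype.card V) :
    ∃ A : Fin k → Finset V, IsPacking A := by
  obtain ⟨e⟩ : Nonempty (Fin k ↪ V) := Function.Embedding.nonempty_of_card_le (by simpa using hk)
  exact ⟨fun i => {e i}, fun i => singleton_nonempty _,
    fun i j hij => disjoint_singleton.2 (e.injective.ne hij)⟩

variable [Fintype V] [DecidableEq V] {w : V → V → ℝ} {k : ℕ}

lemma rho_eq_sInf_range :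
    rho w k = sInf ((fun A : Fin k → Finset V => ⨆ i, phi w (A i)) '' {A | IsPacking A}) := by
  refine congrArg sInf (Set.ext fun r => ?_)
  exact ⟨fun ⟨A, hne, hdisj, hr⟩ => ⟨A, ⟨hne, fun i j => hdisj i j⟩, hr.symm⟩,
    fun ⟨A, hA, hr⟩ => ⟨A, hA.nonempty, fun _ _ hij => hA.disjoint hij, hr.symm⟩⟩

lemma exists_isPacking_phi_le_rho (hk : k ≤ Fintype.card V) :
    ∃ A : Fin k → Finset V, IsPacking A ∧ ∀ i, phi w (A i) ≤ rho w k := by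
  obtain ⟨A, hA, hmin⟩ := (Set.Nonempty.image (s := {A | IsPacking A})
    (fun A : Fin k → Finset V => ⨆ i, phi w (A i)) (exists_isPacking hk)).csInf_mem (Set.toFinite _)
  refine ⟨A, hA, fun i => ?_⟩
  rw [rho_eq_sInf_range, ← hmin]
  exact le_ciSup (f := fun i => phi w (A i)) (Set.finite_range _).bddAbove i

lemma IsPacking.exists_rho_le_phi {A : Fin k → Finset V} (hA : IsPacking A) (hk : 1 ≤ k) :
    ∃ i, rho w k ≤ phi w (A i) := by
  have : NeZero k := ⟨by omega⟩
  obtain ⟨i, hi⟩ := exists_eq_ciSup_of_finite (f := fun i => phi w (A i))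
  refine ⟨i, ?_⟩
  rw [hi, rho_eq_sInf_range]
  exact csInf_le (Set.toFinite _).bddBelow ⟨A, hA, rfl⟩

lemma rho_nonneg (hn : ∀ u v, 0 ≤ w u v) (hd : ∀ v, 0 < deg w v) (k : ℕ) : 0 ≤ rho w k := by
  rw [rho_eq_sInf_range]
  refine Real.sInf_nonneg ?_
  rintro _ ⟨A, -, rfl⟩
  exact Real.iSup_nonneg fun i => phi_nonneg hn hd (A i)

end Packing

section EasyCheeger

variable {V ι : Type*} {w : V → V → ℝ} [Fintype ι] {A : ι → Finset V}

/-- The function with value `c i` on `A i` and `0` off the packing, as a linear map in `c`. -/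
noncomputable def stepFun (A : ι → Finset V) : (ι → ℝ) →ₗ[ℝ] V → ℝ :=
  Fintype.linearCombination ℝ fun i => Set.indicator (A i : Set V) 1

lemma stepFun_apply (c : ι → ℝ) (v : V) :
    stepFun A c v = ∑ i, c i * Set.indicator (A i : Set V) 1 v := by
  simp [stepFun, Fintype.linearCombination_apply]

lemma IsPacking.stepFun_of_mem (hA : IsPacking A) (c : ι → ℝ) {i : ι} {v : V} (hv : v ∈ A i) :
    stepFun A c v = c i := by
  rw [stepFun_apply, sum_eq_single i]
  · simp [hv]
  · intro j _ hj
    simp [disjoint_left.1 (hA.disjoint hj.symm) hv]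
  · simp

lemma IsPacking.stepFun_sq (hA : IsPacking A) (c : ι → ℝ) (v : V) :
    stepFun A c v ^ 2 = ∑ i, c i ^ 2 * Set.indicator (A i : Set V) 1 v := by
  rw [← stepFun_apply (c := fun i => c i ^ 2)]
  by_cases hv : ∃ i, v ∈ A i
  · obtain ⟨i, hi⟩ := hv
    rw [hA.stepFun_of_mem _ hi, hA.stepFun_of_mem _ hi]
  · push Not at hv
    simp [stepFun_apply, hv]

lemma IsPacking.stepFun_sub_sq_le (hA : IsPacking A) (c : ι → ℝ) (u v : V) :
    (stepFun A c u - stepFun A c v) ^ 2 ≤ 2 * ∑ i, c i ^ 2 *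
      (Set.indicator (A i : Set V) 1 u - Set.indicator (A i : Set V) 1 v) ^ 2 := by
  by_cases huv : ∃ i, u ∈ A i ∧ v ∈ A i
  · obtain ⟨i, hu, hv⟩ := huv
    rw [hA.stepFun_of_mem c hu, hA.stepFun_of_mem c hv, sub_self, zero_pow two_ne_zero]
    positivity
  · push Not at huv
    have hsplit : ∑ i, c i ^ 2 *
        (Set.indicator (A i : Set V) 1 u - Set.indicator (A i : Set V) 1 v) ^ 2
        = stepFun A c u ^ 2 + stepFun A c v ^ 2 := by
      rw [hA.stepFun_sq, hA.stepFun_sq, ← sum_add_distrib]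
      refine sum_congr rfl fun i _ => ?_
      by_cases hu : u ∈ A i
      · simp [hu, huv i hu]
      · by_cases hv : v ∈ A i <;> simp [hu, hv]
    rw [hsplit]
    linarith [sq_nonneg (stepFun A c u + stepFun A c v)]

variable [Fintype V]

lemma normSq_indicator (S : Finset V) :
    normSq w univ (Set.indicator (S : Set V) 1) = vol w S := by
  classical simp [normSq, vol, Set.indicator_apply]

lemma IsPacking.normSq_stepFun (hA : IsPacking A) (c : ι → ℝ) :
    normSq w univ (stepFun A c) = ∑ i, c i ^ 2 * vol w (A i) := by
  simp only [← normSq_indicator, normSq, hA.stepFun_sq, mul_sum]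
  rw [sum_comm]
  refine sum_congr rfl fun i _ => sum_congr rfl fun v _ => ?_
  by_cases hv : v ∈ A i <;> simp [hv, mul_comm]

variable [DecidableEq V]

lemma dirichlet_indicator (hs : ∀ u v, w u v = w v u) (S : Finset V) :
    dirichlet w univ (Set.indicator (S : Set V) 1) = eW w S univ := by
  have hself : ∑ u, ∑ v, w u v * (Set.indicator (S : Set V) 1 u * Set.indicator (S : Set V) 1 v)
      = crossWeight w S S := by
    simp [crossWeight, Set.indicator_apply, sum_ite_mem]
  have hvol : vol w S = crossWeight w S S + eW w S univ := by
    rw [eW_eq_crossWeight, ← crossWeight_union_right S disjoint_sdiff,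
      union_sdiff_of_subset (subset_univ S)]
    rfl
  rw [dirichlet_univ_eq hs, normSq_indicator, hself, hvol, add_sub_cancel_left]

lemma IsPacking.dirichlet_stepFun_le (hs : ∀ u v, w u v = w v u) (hn : ∀ u v, 0 ≤ w u v)
    (hA : IsPacking A) (c : ι → ℝ) :
    dirichlet w univ (stepFun A c) ≤ 2 * ∑ i, c i ^ 2 * eW w (A i) univ := by
  calc dirichlet w univ (stepFun A c)
      ≤ (∑ u, ∑ v, w u v * (2 * ∑ i, c i ^ 2 *
          (Set.indicator (A i : Set V) 1 u - Set.indicator (A i : Set V) 1 v) ^ 2)) / 2 := by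
        unfold dirichlet
        gcongr with u _ v _
        · exact hn u v
        · exact hA.stepFun_sub_sq_le c u v
    _ = 2 * ∑ i, c i ^ 2 * dirichlet w univ (Set.indicator (A i : Set V) 1) := by
        simp only [dirichlet, mul_sum, sum_div]
        rw [sum_comm_cycle]
        refine sum_congr rfl fun i _ => sum_congr rfl fun u _ => sum_congr rfl fun v _ => ?_
        ring
    _ = 2 * ∑ i, c i ^ 2 * eW w (A i) univ := by simp only [dirichlet_indicator hs]

lemma lam_le_two_mul_rho (hs : ∀ u v, w u v = w v u) (hn : ∀ u v, 0 ≤ w u v)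
    (hd : ∀ v, 0 < deg w v) {k : ℕ} (hk : 1 ≤ k) (hkV : k ≤ Fintype.card V) :
    lam w k ≤ 2 * rho w k := by
  obtain ⟨A, hA, hphi⟩ := exists_isPacking_phi_le_rho (w := w) hkV
  obtain ⟨c, hc, hle⟩ := exists_lam_mul_normSq_le_dirichlet hs hd hk hkV (stepFun A) (by simp)
  have hpos : 0 < ∑ i, c i ^ 2 * vol w (A i) := by
    obtain ⟨i, hi⟩ := Function.ne_iff.1 hc
    exact sum_pos' (fun j _ => mul_nonneg (sq_nonneg _) (vol_nonneg hd _))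
      ⟨i, mem_univ i, mul_pos (sq_pos_of_ne_zero hi) (vol_pos hd (hA.nonempty i))⟩
  refine le_of_mul_le_mul_right ?_ hpos
  calc lam w k * ∑ i, c i ^ 2 * vol w (A i)
      ≤ 2 * ∑ i, c i ^ 2 * eW w (A i) univ := by
        rw [← hA.normSq_stepFun]
        exact hle.trans (hA.dirichlet_stepFun_le hs hn c)
    _ ≤ 2 * ∑ i, c i ^ 2 * (rho w k * vol w (A i)) := by
        gcongr with i
        exact (phi_le_iff hd (hA.nonempty i)).1 (hphi i)
    _ = 2 * rho w k * ∑ i, c i ^ 2 * vol w (A i) := by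
        simp only [mul_sum]
        exact sum_congr rfl fun i _ => by ring

end EasyCheeger

section Coarea

open MeasureTheory

lemma integrable_mul_indicator_Ico_one (c a b : ℝ) :
    Integrable fun t => c * (Set.Ico a b).indicator (1 : ℝ → ℝ) t :=
  ((integrable_indicator_iff measurableSet_Ico).2 (integrableOn_const (by simp))).const_mul c

lemma integral_mul_indicator_Ico_one (c a b : ℝ) :
    ∫ t, c * (Set.Ico a b).indicator (1 : ℝ → ℝ) t = c * (b - a)⁺ := by
  rw [integral_const_mul, integral_indicator_one measurableSet_Ico, Real.volume_real_Ico,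
    posPart_def]

lemma sum_mul_posPart_le_of_forall_indicator_Ico {κ κ' : Type*} {s : Finset κ} {s' : Finset κ'}
    {c a b : κ → ℝ} {c' a' b' : κ' → ℝ}
    (h : ∀ t, ∑ i ∈ s, c i * (Set.Ico (a i) (b i)).indicator 1 t
      ≤ ∑ i ∈ s', c' i * (Set.Ico (a' i) (b' i)).indicator 1 t) :
    ∑ i ∈ s, c i * (b i - a i)⁺ ≤ ∑ i ∈ s', c' i * (b' i - a' i)⁺ := by
  simp only [← integral_mul_indicator_Ico_one]
  rw [← integral_finsetSum _ fun i _ => integrable_mul_indicator_Ico_one ..,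
    ← integral_finsetSum _ fun i _ => integrable_mul_indicator_Ico_one ..]
  exact integral_mono (integrable_finsetSum _ fun i _ => integrable_mul_indicator_Ico_one ..)
    (integrable_finsetSum _ fun i _ => integrable_mul_indicator_Ico_one ..) h

end Coarea

section Expansion

variable {V : Type*} {w : V → V → ℝ} {P : Finset V} {α : ℝ}

lemma exists_median (P : Finset V) {d : V → ℝ} (hd : ∀ v, 0 ≤ d v) (f : V → ℝ) :
    ∃ m, ∑ v ∈ P with m < f v, d v ≤ (∑ v ∈ P, d v) / 2 ∧
      ∑ v ∈ P with f v < m, d v ≤ (∑ v ∈ P, d v) / 2 := by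
  rcases P.eq_empty_or_nonempty with rfl | hP
  · simp
  have hhalf : 0 ≤ (∑ v ∈ P, d v) / 2 := div_nonneg (sum_nonneg fun v _ => hd v) two_pos.le
  obtain ⟨x, hx, hxmin⟩ := exists_min_image P f hP
  have hlow : {y ∈ P | ∑ v ∈ P with f v < f y, d v ≤ (∑ v ∈ P, d v) / 2}.Nonempty :=
    ⟨x, mem_filter.2 ⟨hx, by rwa [filter_false_of_mem fun v hv => (hxmin v hv).not_gt, sum_empty]⟩⟩
  obtain ⟨y, hy, hymax⟩ := exists_max_image _ f hlow
  refine ⟨f y, ?_, (mem_filter.1 hy).2⟩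
  rcases {v ∈ P | f y < f v}.eq_empty_or_nonempty with hempty | hup
  · rwa [hempty, sum_empty]
  obtain ⟨z, hz, hzmin⟩ := exists_min_image _ f hup
  rw [mem_filter] at hz
  have hzlow : (∑ v ∈ P, d v) / 2 < ∑ v ∈ P with f v < f z, d v := by
    by_contra! hle
    exact (hymax z (mem_filter.2 ⟨hz.1, hle⟩)).not_gt hz.2
  have hcompl : {v ∈ P | f y < f v} = {v ∈ P | ¬ f v < f z} :=
    filter_congr fun v hv =>
      ⟨fun h => (hzmin v (mem_filter.2 ⟨hv, h⟩)).not_gt, fun h => hz.2.trans_le (not_lt.1 h)⟩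
  rw [hcompl]
  linarith [sum_filter_add_sum_filter_not P (fun v => f v < f z) d]

variable [Fintype V]

lemma mul_sum_deg_mul_le_sum_posPart [DecidableEq V] {q : V → ℝ} (hq : ∀ v ∈ P, 0 ≤ q v)
    (hα : ∀ t ≥ 0, α * vol w {v ∈ P | t < q v} ≤ eW w {v ∈ P | t < q v} P) :
    α * ∑ v ∈ P, deg w v * q v ≤ ∑ u ∈ P, ∑ v ∈ P, w u v * (q u - q v)⁺ := by
  -- Coarea argument: integrate the cut inequality for the level sets `{q > t}` over `t`.
  have hlevel (t : ℝ) : ∑ v ∈ P, α * deg w v * (Set.Ico 0 (q v)).indicator 1 t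
      ≤ ∑ e ∈ P ×ˢ P, w e.1 e.2 * (Set.Ico (q e.2) (q e.1)).indicator 1 t := by
    rcases lt_or_ge t 0 with ht | ht
    · have hleft : ∑ v ∈ P, α * deg w v * (Set.Ico 0 (q v)).indicator 1 t = 0 := by
        simp [ht.not_ge]
      have hright : ∑ e ∈ P ×ˢ P, w e.1 e.2 * (Set.Ico (q e.2) (q e.1)).indicator 1 t = 0 :=
        sum_eq_zero fun e he => by simp [(ht.trans_le (hq e.2 (mem_product.1 he).2)).not_ge]
      rw [hleft, hright]
    · have hvol : ∑ v ∈ P, α * deg w v * (Set.Ico 0 (q v)).indicator 1 t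
          = α * vol w {v ∈ P | t < q v} := by
        simp [vol, mul_sum, sum_filter, Set.indicator_apply, ht]
      have hcut : ∑ e ∈ P ×ˢ P, w e.1 e.2 * (Set.Ico (q e.2) (q e.1)).indicator 1 t
          = eW w {v ∈ P | t < q v} P := by
        rw [eW, ← filter_not, sum_filter, sum_product]
        refine sum_congr rfl fun u _ => ?_
        by_cases hu : t < q u <;> simp [hu, sum_filter, Set.indicator_apply]
      rw [hvol, hcut]
      exact hα t ht
  have hint := sum_mul_posPart_le_of_forall_indicator_Ico hlevel
  have hdeg : ∑ v ∈ P, α * deg w v * (q v - 0)⁺ = α * ∑ v ∈ P, deg w v * q v := by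
    rw [mul_sum]
    exact sum_congr rfl fun v hv => by rw [sub_zero, posPart_of_nonneg (hq v hv), mul_assoc]
  rwa [hdeg, sum_product] at hint

omit [Fintype V] in
lemma sum_mul_posPart_sub (hs : ∀ u v, w u v = w v u) (P : Finset V) (q : V → ℝ) :
    ∑ u ∈ P, ∑ v ∈ P, w u v * (q u - q v)⁺ = (∑ u ∈ P, ∑ v ∈ P, w u v * |q u - q v|) / 2 := by
  have hswap : ∑ u ∈ P, ∑ v ∈ P, w u v * (q u - q v)⁻ = ∑ u ∈ P, ∑ v ∈ P, w u v * (q u - q v)⁺ := by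
    rw [sum_comm]
    refine sum_congr rfl fun u _ => sum_congr rfl fun v _ => ?_
    rw [hs v u, ← posPart_neg, neg_sub]
  simp only [← posPart_add_negPart, mul_add, sum_add_distrib, hswap]
  ring

lemma sum_mul_sq_add_sq_le (hs : ∀ u v, w u v = w v u) (hn : ∀ u v, 0 ≤ w u v) (P : Finset V)
    (h : V → ℝ) : ∑ u ∈ P, ∑ v ∈ P, w u v * (h u ^ 2 + h v ^ 2) ≤ 2 * normSq w P h := by
  have hleft : ∑ u ∈ P, ∑ v ∈ P, w u v * h u ^ 2 ≤ normSq w P h := by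
    simp only [← sum_mul]
    exact sum_le_sum fun u _ => mul_le_mul_of_nonneg_right
      (sum_le_sum_of_subset_of_nonneg (subset_univ P) fun v _ _ => hn u v) (sq_nonneg _)
  have hright : ∑ u ∈ P, ∑ v ∈ P, w u v * h v ^ 2 = ∑ u ∈ P, ∑ v ∈ P, w u v * h u ^ 2 := by
    rw [sum_comm]
    simp only [hs]
  simp only [mul_add, sum_add_distrib, hright]
  linarith

lemma sq_div_two_mul_normSq_le_dirichlet_of_nonneg [DecidableEq V] (hs : ∀ u v, w u v = w v u)
    (hn : ∀ u v, 0 ≤ w u v) (hα : 0 ≤ α) {h : V → ℝ} (hh : ∀ v, 0 ≤ h v)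
    (hS : ∀ S ⊆ P, (∀ v ∈ S, 0 < h v) → α * vol w S ≤ eW w S P) :
    α ^ 2 / 2 * normSq w P h ≤ dirichlet w P h := by
  have hcoarea : α * normSq w P h ≤ (∑ u ∈ P, ∑ v ∈ P, w u v * |h u ^ 2 - h v ^ 2|) / 2 := by
    rw [← sum_mul_posPart_sub hs P fun v => h v ^ 2]
    refine mul_sum_deg_mul_le_sum_posPart (fun v _ => sq_nonneg _) fun t ht => ?_
    refine hS _ (filter_subset _ _) fun v hv => (hh v).lt_of_ne' ?_
    exact (sq_pos_iff.1 (ht.trans_lt (mem_filter.1 hv).2))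
  have hamgm (a b : ℝ) : α * |a ^ 2 - b ^ 2| ≤ (a - b) ^ 2 + α ^ 2 / 2 * (a ^ 2 + b ^ 2) := by
    rw [sq_sub_sq, abs_mul]
    nlinarith [sq_nonneg (|a - b| - α / 2 * |a + b|), sq_abs (a - b), sq_abs (a + b),
      mul_nonneg (sq_nonneg α) (sq_nonneg (a - b))]
  have hpairs : α * ∑ u ∈ P, ∑ v ∈ P, w u v * |h u ^ 2 - h v ^ 2|
      ≤ 2 * dirichlet w P h + α ^ 2 / 2 * ∑ u ∈ P, ∑ v ∈ P, w u v * (h u ^ 2 + h v ^ 2) := by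
    rw [dirichlet, mul_div_cancel₀ _ two_ne_zero]
    simp only [mul_sum, ← sum_add_distrib]
    refine sum_le_sum fun u _ => sum_le_sum fun v _ => ?_
    linarith [mul_le_mul_of_nonneg_left (hamgm (h u) (h v)) (hn u v)]
  have hnorm := mul_le_mul_of_nonneg_left (sum_mul_sq_add_sq_le hs hn P h)
    (by positivity : 0 ≤ α ^ 2 / 2)
  linarith [mul_le_mul_of_nonneg_left hcoarea hα]

lemma posPart_mul_negPart_eq_zero {R : Type*} [Ring R] [LinearOrder R] [IsOrderedRing R] (x : R) :
    x⁺ * x⁻ = 0 := by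
  rcases le_total 0 x with hx | hx
  · rw [negPart_of_nonneg hx, mul_zero]
  · rw [posPart_of_nonpos hx, zero_mul]

lemma normSq_posPart_add_normSq_negPart (P : Finset V) (g : V → ℝ) :
    normSq w P g⁺ + normSq w P g⁻ = normSq w P g := by
  simp only [normSq, ← sum_add_distrib, Pi.posPart_apply, Pi.negPart_apply]
  refine sum_congr rfl fun v _ => ?_
  conv_rhs => rw [← posPart_sub_negPart (g v)]
  linear_combination 2 * deg w v * posPart_mul_negPart_eq_zero (g v)

omit [Fintype V] in
lemma dirichlet_posPart_add_dirichlet_negPart_le (hn : ∀ u v, 0 ≤ w u v) (P : Finset V)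
    (g : V → ℝ) : dirichlet w P g⁺ + dirichlet w P g⁻ ≤ dirichlet w P g := by
  have hpoint (x y : ℝ) : (x⁺ - y⁺) ^ 2 + (x⁻ - y⁻) ^ 2 ≤ (x - y) ^ 2 := by
    conv_rhs => rw [← posPart_sub_negPart x, ← posPart_sub_negPart y]
    have hxy := mul_nonneg (posPart_nonneg x) (negPart_nonneg y)
    have hyx := mul_nonneg (posPart_nonneg y) (negPart_nonneg x)
    linarith [posPart_mul_negPart_eq_zero x, posPart_mul_negPart_eq_zero y]
  simp only [dirichlet, ← add_div, ← sum_add_distrib, ← mul_add, Pi.posPart_apply,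
    Pi.negPart_apply]
  gcongr with u _ v _
  · exact hn u v
  · exact hpoint (g u) (g v)

lemma normSq_le_normSq_sub_const (hd : ∀ v, 0 < deg w v) {f : V → ℝ}
    (hf : ∑ v ∈ P, deg w v * f v = 0) (m : ℝ) :
    normSq w P f ≤ normSq w P fun v => f v - m := by
  have hexpand : normSq w P (fun v => f v - m)
      = normSq w P f + m ^ 2 * vol w P - 2 * m * ∑ v ∈ P, deg w v * f v := by
    simp only [normSq, vol, mul_sum, ← sum_add_distrib, ← sum_sub_distrib]
    exact sum_congr rfl fun v _ => by ring
  rw [hexpand, hf]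
  linarith [mul_nonneg (sq_nonneg m) (vol_nonneg hd P)]

omit [Fintype V] in
lemma dirichlet_sub_const (P : Finset V) (f : V → ℝ) (m : ℝ) :
    dirichlet w P (fun v => f v - m) = dirichlet w P f := by
  simp only [dirichlet, sub_sub_sub_cancel_right]

variable [DecidableEq V]

/-- Edge expansion of the subgraph induced on `P`, with volumes measured in the whole graph; this
is a stronger requirement than `inCondGE`, which measures them inside `P`. -/
def Expands (w : V → V → ℝ) (P : Finset V) (α : ℝ) : Prop :=
  ∀ S ⊆ P, α * min (vol w S) (vol w (P \ S)) ≤ eW w S P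

lemma Expands.mono (hd : ∀ v, 0 < deg w v) {α' : ℝ} (hα : α' ≤ α) (hP : Expands w P α) :
    Expands w P α' := fun S hS =>
  (mul_le_mul_of_nonneg_right hα (le_min (vol_nonneg hd _) (vol_nonneg hd _))).trans (hP S hS)

lemma Expands.mul_vol_le_eW (hP : Expands w P α) {S : Finset V} (hS : S ⊆ P)
    (hhalf : vol w S ≤ vol w P / 2) : α * vol w S ≤ eW w S P := by
  have hadd : vol w (P \ S) + vol w S = vol w P := sum_sdiff hS
  have hle := hP S hS
  rwa [min_eq_left (by linarith)] at hle

lemma Expands.inCondGE (hn : ∀ u v, 0 ≤ w u v) (hα : 0 ≤ α) (hP : Expands w P α) :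
    inCondGE w P α := by
  intro S hS _ _ hhalf
  have hadd : volIn w P (P \ S) + volIn w P S = volIn w P P := sum_sdiff hS
  have hcompl : volIn w P S ≤ vol w (P \ S) := by linarith [volIn_le_vol hn P (P \ S)]
  exact (mul_le_mul_of_nonneg_left (le_min (volIn_le_vol hn P S) hcompl) hα).trans (hP S hS)

lemma Expands.sq_div_two_mul_normSq_le_dirichlet (hs : ∀ u v, w u v = w v u)
    (hn : ∀ u v, 0 ≤ w u v) (hd : ∀ v, 0 < deg w v) (hα : 0 ≤ α) (hP : Expands w P α)
    {f : V → ℝ} (hf : ∑ v ∈ P, deg w v * f v = 0) :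
    α ^ 2 / 2 * normSq w P f ≤ dirichlet w P f := by
  obtain ⟨m, habove, hbelow⟩ := exists_median P (fun v => (hd v).le) f
  let g : V → ℝ := fun v => f v - m
  have hside {S T : Finset V} (hSP : S ⊆ P) (hST : S ⊆ T) (hT : vol w T ≤ vol w P / 2) :
      α * vol w S ≤ eW w S P :=
    hP.mul_vol_le_eW hSP
      ((sum_le_sum_of_subset_of_nonneg hST fun v _ _ => (hd v).le).trans hT)
  have hpos : α ^ 2 / 2 * normSq w P g⁺ ≤ dirichlet w P g⁺ :=
    sq_div_two_mul_normSq_le_dirichlet_of_nonneg hs hn hα (fun v => posPart_nonneg (g v))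
      fun S hS hSg => hside hS (fun v hv => mem_filter.2
        ⟨hS hv, sub_pos.1 (posPart_pos_iff.1 (hSg v hv))⟩) habove
  have hneg : α ^ 2 / 2 * normSq w P g⁻ ≤ dirichlet w P g⁻ :=
    sq_div_two_mul_normSq_le_dirichlet_of_nonneg hs hn hα (fun v => negPart_nonneg (g v))
      fun S hS hSg => hside hS (fun v hv => mem_filter.2
        ⟨hS hv, sub_neg.1 (negPart_pos_iff.1 (hSg v hv))⟩) hbelow
  calc α ^ 2 / 2 * normSq w P f
      ≤ α ^ 2 / 2 * normSq w P g := by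
        gcongr
        exact normSq_le_normSq_sub_const hd hf m
    _ ≤ dirichlet w P g⁺ + dirichlet w P g⁻ := by
        rw [← normSq_posPart_add_normSq_negPart, mul_add]
        exact add_le_add hpos hneg
    _ ≤ dirichlet w P g := dirichlet_posPart_add_dirichlet_negPart_le hn P g
    _ = dirichlet w P f := dirichlet_sub_const P f m

end Expansion

section Parts

variable {V ι : Type*} [Fintype V] [DecidableEq ι] {w : V → V → ℝ} {p : V → ι}

/-- The part labelled `i` of the partition of `V` into the fibres of `p`. Parts may be empty. -/
def part (p : V → ι) (i : ι) : Finset V :=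
  univ.filter fun v => p v = i

lemma mem_part {i : ι} {v : V} : v ∈ part p i ↔ p v = i := by
  simp [part]

lemma disjoint_part {i j : ι} (hij : i ≠ j) : Disjoint (part p i) (part p j) :=
  disjoint_filter.2 fun _ _ hi hj => hij (hi.symm.trans hj)

variable [Fintype ι]

lemma sum_normSq_part (p : V → ι) (f : V → ℝ) :
    ∑ i, normSq w (part p i) f = normSq w univ f :=
  sum_fiberwise univ p _

lemma sum_dirichlet_part_le (hn : ∀ u v, 0 ≤ w u v) (p : V → ι) (f : V → ℝ) :
    ∑ i, dirichlet w (part p i) f ≤ dirichlet w univ f := by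
  simp only [dirichlet, ← sum_div]
  rw [← sum_fiberwise univ p]
  refine div_le_div_of_nonneg_right (sum_le_sum fun i _ => sum_le_sum fun u _ => ?_) two_pos.le
  exact sum_le_sum_of_subset_of_nonneg (subset_univ _) fun v _ _ =>
    mul_nonneg (hn u v) (sq_nonneg _)

lemma sq_div_two_le_lam [DecidableEq V] (hs : ∀ u v, w u v = w v u) (hn : ∀ u v, 0 ≤ w u v)
    (hd : ∀ v, 0 < deg w v) {α : ℝ} (hα : 0 ≤ α) (hp : ∀ i, Expands w (part p i) α) {k : ℕ}
    (hk : Fintype.card ι < k) (hkV : k ≤ Fintype.card V) : α ^ 2 / 2 ≤ lam w k := by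
  obtain ⟨f, hf, hmean, hle⟩ := exists_dirichlet_le_lam_mul_normSq hs hd hkV
    (LinearMap.pi fun i => ∑ v ∈ part p i, deg w v • LinearMap.proj v : (V → ℝ) →ₗ[ℝ] ι → ℝ)
    (by rwa [Module.finrank_fintype_fun_eq_card])
  have hpart (i : ι) : α ^ 2 / 2 * normSq w (part p i) f ≤ dirichlet w (part p i) f :=
    (hp i).sq_div_two_mul_normSq_le_dirichlet hs hn hd hα (by simpa using congrFun hmean i)
  refine le_of_mul_le_mul_right ?_ (normSq_univ_pos hd hf)
  calc α ^ 2 / 2 * normSq w univ f = ∑ i, α ^ 2 / 2 * normSq w (part p i) f := by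
        rw [← mul_sum, sum_normSq_part]
    _ ≤ ∑ i, dirichlet w (part p i) f := sum_le_sum fun i _ => hpart i
    _ ≤ dirichlet w univ f := sum_dirichlet_part_le hn p f
    _ ≤ lam w k * normSq w univ f := hle

end Parts

section Cores

variable {V : Type*} [Fintype V] [DecidableEq V] {w : V → V → ℝ} {k : ℕ} {A : Fin k → Finset V}

lemma IsPacking.rho_succ_le_phi_of_disjoint (hA : IsPacking A) {S : Finset V} (hS : S.Nonempty)
    (hdisj : ∀ i, Disjoint S (A i)) :
    rho w (k + 1) ≤ phi w S ∨ ∃ i, rho w (k + 1) ≤ phi w (A i) := by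
  obtain ⟨i, hi⟩ := (hA.cons hS hdisj).exists_rho_le_phi (w := w) k.succ_pos
  induction i using Fin.cases with
  | zero => exact .inl hi
  | succ j => exact .inr ⟨j, hi⟩

lemma IsPacking.rho_succ_le_phi_of_ssubset (hA : IsPacking A) {i : Fin k} {B : Finset V}
    (hB : B.Nonempty) (hBA : B ⊂ A i) :
    rho w (k + 1) ≤ phi w B ∨ rho w (k + 1) ≤ phi w (A i \ B) ∨
      ∃ j, rho w (k + 1) ≤ phi w (A j) := by
  have hsplit := hA.update i (sdiff_nonempty.2 hBA.not_subset)
    fun j hj => (hA.disjoint hj.symm).mono_left sdiff_subset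
  refine (hsplit.rho_succ_le_phi_of_disjoint (w := w) hB fun j => ?_).imp_right fun ⟨j, hj⟩ => ?_
  · by_cases hj : j = i
    · simpa [hj] using disjoint_sdiff
    · simpa [hj] using (hA.disjoint (Ne.symm hj)).mono_left hBA.subset
  · by_cases hji : j = i
    · exact .inl (by simpa [hji] using hj)
    · exact .inr ⟨j, by simpa [hji] using hj⟩

lemma exists_minimal_isPacking_phi_le_rho (hk : k ≤ Fintype.card V) :
    ∃ A : Fin k → Finset V, IsPacking A ∧ (∀ i, phi w (A i) ≤ rho w k) ∧
      ∀ i, ∀ B ⊂ A i, B.Nonempty → rho w k < phi w B := by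
  obtain ⟨A, ⟨hA, hphi⟩, hmin⟩ := exists_minimal_of_wellFoundedLT
    (fun A : Fin k → Finset V => IsPacking A ∧ ∀ i, phi w (A i) ≤ rho w k)
    (exists_isPacking_phi_le_rho hk)
  refine ⟨A, hA, hphi, fun i B hBA hB => ?_⟩
  by_contra! hle
  have hupdate : ∀ j, phi w (Function.update A i B j) ≤ rho w k := fun j => by
    by_cases hj : j = i
    · simpa [hj] using hle
    · simpa [hj] using hphi j
  have hge := hmin
    ⟨hA.update i hB fun j hj => (hA.disjoint hj.symm).mono_left hBA.subset, hupdate⟩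
    (update_le_self_iff.2 hBA.subset) i
  rw [Function.update_self] at hge
  exact hBA.not_subset hge

/-- The cores from which the partition is grown, for thresholds `r = ρ(k)` and `R = ρ(k + 1)`: sets
of conductance at most `r`, minimal as such, that leave no room for one more set of conductance
below `R`, neither outside of the cores nor by splitting one of them. -/
structure IsCoreSystem (w : V → V → ℝ) (A : Fin k → Finset V) (r R : ℝ) : Prop
    extends IsPacking A where
  phi_le : ∀ i, phi w (A i) ≤ r
  lt_phi_of_ssubset : ∀ i, ∀ B ⊂ A i, B.Nonempty → r < phi w B
  le_phi_of_disjoint : ∀ S : Finset V, S.Nonempty → (∀ i, Disjoint S (A i)) → R ≤ phi w S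
  le_phi_or_le_phi_sdiff :
    ∀ i, ∀ B ⊂ A i, B.Nonempty → R ≤ phi w B ∨ R ≤ phi w (A i \ B)

lemma exists_isCoreSystem (hn : ∀ u v, 0 ≤ w u v) (hd : ∀ v, 0 < deg w v)
    (hk : k ≤ Fintype.card V) {ε : ℝ} (hε : 0 < ε)
    (hgap : (1 + ε) * rho w k ≤ rho w (k + 1)) :
    ∃ A : Fin k → Finset V, IsCoreSystem w A (rho w k) (rho w (k + 1)) := by
  obtain ⟨A, hA, hphi, hmin⟩ := exists_minimal_isPacking_phi_le_rho (w := w) hk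
  have hdegenerate {i : Fin k} (hi : rho w (k + 1) ≤ phi w (A i)) (S : Finset V) :
      rho w (k + 1) ≤ phi w S := by
    have hzero : ε * rho w k ≤ 0 := by linarith [hphi i]
    have hrho : rho w k ≤ 0 := nonpos_of_mul_nonpos_right hzero hε
    exact ((hi.trans (hphi i)).trans hrho).trans (phi_nonneg hn hd S)
  refine ⟨A, hA, hphi, hmin, fun S hS hdisj => ?_, fun i B hBA hB => ?_⟩
  · exact (hA.rho_succ_le_phi_of_disjoint hS hdisj).elim id fun ⟨i, hi⟩ => hdegenerate hi S
  · rcases hA.rho_succ_le_phi_of_ssubset (w := w) hB hBA with hle | hle | ⟨j, hj⟩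
    · exact .inl hle
    · exact .inr hle
    · exact .inl (hdegenerate hj B)

end Cores

section CorePartition

variable {V ι : Type*} [Fintype V] [DecidableEq V] [DecidableEq ι] {w : V → V → ℝ}
  {A : ι → Finset V} {p : V → ι}

/-- The partition `p` extends the packing `A`, and no set of vertices outside of `A` is joined to
another part more heavily than to the rest of its own. -/
structure IsCorePartition (w : V → V → ℝ) (A : ι → Finset V) (p : V → ι) : Prop where
  subset_part : ∀ i, A i ⊆ part p i
  eW_le : ∀ i j, ∀ S ⊆ part p i, Disjoint S (A i) → eW w S (part p j) ≤ eW w S (part p i)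

omit [DecidableEq V] in
lemma IsPacking.exists_subset_part [Nonempty ι] (hA : IsPacking A) :
    ∃ p : V → ι, ∀ i, A i ⊆ part p i := by
  classical
  refine ⟨fun v => if h : ∃ i, v ∈ A i then h.choose else Classical.arbitrary ι, fun i v hv => ?_⟩
  have hex : ∃ i, v ∈ A i := ⟨i, hv⟩
  rw [mem_part, dif_pos hex]
  by_contra hne
  exact disjoint_left.1 (hA.disjoint hne) hex.choose_spec hv

/-- The partition obtained from `p` by moving `S` to the part labelled `j`. -/
def moveTo (p : V → ι) (S : Finset V) (j : ι) : V → ι :=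
  fun v => if v ∈ S then j else p v

lemma part_moveTo_self (S : Finset V) (j : ι) : part (moveTo p S j) j = part p j ∪ S := by
  ext v
  by_cases hv : v ∈ S <;> simp [mem_part, moveTo, hv]

lemma part_moveTo_of_ne (S : Finset V) {i j : ι} (hij : i ≠ j) :
    part (moveTo p S j) i = part p i \ S := by
  ext v
  by_cases hv : v ∈ S <;> simp [mem_part, moveTo, hv, hij.symm]

lemma sum_crossWeight_part_moveTo [Fintype ι] (hs : ∀ u v, w u v = w v u) {S : Finset V} {i j : ι}
    (hij : i ≠ j) (hS : S ⊆ part p i) :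
    ∑ l, crossWeight w (part (moveTo p S j) l) (part (moveTo p S j) l)
      = ∑ l, crossWeight w (part p l) (part p l)
        + 2 * eW w S (part p j) - 2 * eW w S (part p i) := by
  have hSj : Disjoint S (part p j) := (disjoint_part hij).mono_left hS
  have hi : crossWeight w (part p i) (part p i) = crossWeight w (part p i \ S) (part p i \ S)
      + crossWeight w S S + 2 * eW w S (part p i) := by
    rw [eW_eq_crossWeight, crossWeight_comm hs S (part p i \ S),
      ← crossWeight_union_self hs sdiff_disjoint, sdiff_union_of_subset hS]
  have hj : crossWeight w (part p j ∪ S) (part p j ∪ S) = crossWeight w (part p j) (part p j)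
      + crossWeight w S S + 2 * eW w S (part p j) := by
    rw [crossWeight_union_self hs hSj.symm, eW_eq_crossWeight_of_disjoint hSj,
      crossWeight_comm hs (part p j) S]
  have hother (l : ι) (hl : l ≠ i ∧ l ≠ j) : crossWeight w (part (moveTo p S j) l)
      (part (moveTo p S j) l) - crossWeight w (part p l) (part p l) = 0 := by
    rw [part_moveTo_of_ne S hl.2, sdiff_eq_self_of_disjoint
      ((disjoint_part hl.1).mono_right hS), sub_self]
  have hdiff := Fintype.sum_eq_add i j hij hother
  rw [sum_sub_distrib, part_moveTo_of_ne S hij, part_moveTo_self, hi, hj] at hdiff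
  linarith

lemma IsPacking.exists_isCorePartition [Finite ι] [Nonempty ι] (hs : ∀ u v, w u v = w v u)
    (hA : IsPacking A) : ∃ p, IsCorePartition w A p := by
  have := Fintype.ofFinite ι
  obtain ⟨p, hp, hmax⟩ := Set.exists_max_image {p : V → ι | ∀ i, A i ⊆ part p i}
    (fun p => ∑ l, crossWeight w (part p l) (part p l)) (Set.toFinite _) hA.exists_subset_part
  refine ⟨p, hp, fun i j S hS hSA => ?_⟩
  rcases eq_or_ne i j with rfl | hij
  · rfl
  have hmove : ∀ l, A l ⊆ part (moveTo p S j) l := fun l => by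
    by_cases hlj : l = j
    · rw [hlj, part_moveTo_self]
      exact (hp j).trans subset_union_left
    · rw [part_moveTo_of_ne S hlj, subset_sdiff]
      refine ⟨hp l, ?_⟩
      by_cases hli : l = i
      · rw [hli]
        exact hSA.symm
      · exact (disjoint_part hli).mono (hp l) hS
  have hle := hmax _ hmove
  rw [sum_crossWeight_part_moveTo hs hij hS] at hle
  linarith

lemma eW_univ_eq_sum_eW_part [Fintype ι] (p : V → ι) (S : Finset V) :
    eW w S univ = ∑ j, eW w S (part p j) := by
  simp only [eW]
  rw [sum_comm (s := univ)]
  refine sum_congr rfl fun u _ => ?_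
  rw [← sum_fiberwise (univ \ S) p]
  exact sum_congr rfl fun j _ => sum_congr (by ext v; simp [mem_part, and_comm]) fun _ _ => rfl

lemma IsCorePartition.eW_univ_le [Fintype ι] (hp : IsCorePartition w A p) {i : ι} {S : Finset V}
    (hS : S ⊆ part p i) (hSA : Disjoint S (A i)) :
    eW w S univ ≤ Fintype.card ι * eW w S (part p i) := by
  rw [eW_univ_eq_sum_eW_part p]
  simpa using sum_le_card_nsmul univ (fun j => eW w S (part p j)) _
    fun j _ => hp.eW_le i j S hS hSA

lemma IsCorePartition.phi_part_le [Fintype ι] (hs : ∀ u v, w u v = w v u)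
    (hn : ∀ u v, 0 ≤ w u v) (hd : ∀ v, 0 < deg w v) (hp : IsCorePartition w A p) {i : ι} {r : ℝ}
    (hA : (A i).Nonempty) (hr : phi w (A i) ≤ r) :
    phi w (part p i) ≤ Fintype.card ι * r := by
  have hcard : (1 : ℝ) ≤ Fintype.card ι := by
    exact_mod_cast Fintype.card_pos_iff.2 ⟨i⟩
  have hsub := hp.subset_part i
  set Q := part p i \ A i with hQ
  have hAQ : Disjoint (A i) Q := disjoint_sdiff
  have hpart : part p i = A i ∪ Q := (union_sdiff_of_subset hsub).symm
  have hout : eW w Q univ ≤ Fintype.card ι * crossWeight w (A i) Q := by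
    refine (hp.eW_univ_le sdiff_subset hAQ.symm).trans_eq ?_
    rw [eW_eq_crossWeight, crossWeight_comm hs, hQ, Finset.sdiff_sdiff_eq_self hsub]
  have hcross : crossWeight w (A i) Q ≤ eW w (A i) univ := crossWeight_le_eW_univ hn hAQ
  have hcore : eW w (A i) univ ≤ r * vol w (A i) := (phi_le_iff hd hA).1 hr
  have hr0 : 0 ≤ r := (phi_nonneg hn hd _).trans hr
  rw [phi_le_iff hd (hA.mono hsub)]
  calc eW w (part p i) univ
      = eW w (A i) univ + eW w Q univ - 2 * crossWeight w (A i) Q := by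
        rw [hpart, eW_union_univ hs hAQ]
    _ ≤ Fintype.card ι * eW w (A i) univ := by
        linarith [mul_nonneg (sub_nonneg.2 hcard) (sub_nonneg.2 hcross),
          crossWeight_nonneg hn (A i) Q]
    _ ≤ Fintype.card ι * (r * vol w (part p i)) := by
        gcongr
        refine hcore.trans ?_
        gcongr
        rw [hpart, vol_union hAQ]
        exact le_add_of_nonneg_right (vol_nonneg hd Q)
    _ = Fintype.card ι * r * vol w (part p i) := by ring

end CorePartition

section CoreExpansion

variable {V : Type*} [Fintype V] [DecidableEq V] {w : V → V → ℝ}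

lemma mul_eW_univ_le_crossWeight (hs : ∀ u v, w u v = w v u) (hn : ∀ u v, 0 ≤ w u v)
    (hd : ∀ v, 0 < deg w v) {B C : Finset V} (hB : B.Nonempty) (hC : C.Nonempty)
    (hBC : Disjoint B C) {r R ε : ℝ} (hε : 0 ≤ ε) (hε1 : ε ≤ 1) (hgap : (1 + ε) * r ≤ R)
    (hunion : phi w (B ∪ C) ≤ r) (hrC : r ≤ phi w C) (hRB : R ≤ phi w B) :
    ε * eW w B univ ≤ 4 * crossWeight w B C := by
  rw [phi_le_iff hd (hB.mono subset_union_left), eW_union_univ hs hBC, vol_union hBC] at hunion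
  rw [le_phi_iff hd hC] at hrC
  rw [le_phi_iff hd hB] at hRB
  have hsplit : eW w B univ - 2 * crossWeight w B C ≤ r * vol w B := by linarith
  have hlarge : (1 + ε) * (r * vol w B) ≤ eW w B univ := by
    rw [← mul_assoc]
    exact (mul_le_mul_of_nonneg_right hgap (vol_nonneg hd B)).trans hRB
  have hscaled := mul_le_mul_of_nonneg_left hsplit (by linarith : 0 ≤ 1 + ε)
  linarith [mul_nonneg (sub_nonneg.2 hε1) (crossWeight_nonneg hn B C)]

variable {k : ℕ} {A : Fin k → Finset V} {p : V → Fin k} {r R ε : ℝ} {i : Fin k} {S : Finset V}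

lemma IsCorePartition.mul_vol_le_of_disjoint (hd : ∀ v, 0 < deg w v)
    (hA : IsCoreSystem w A r R) (hp : IsCorePartition w A p) (hS : S ⊆ part p i)
    (hSA : Disjoint S (A i)) : R * vol w S ≤ k * eW w S (part p i) := by
  rcases S.eq_empty_or_nonempty with rfl | hne
  · simp [vol, eW]
  have hdisj (j : Fin k) : Disjoint S (A j) := by
    rcases eq_or_ne i j with rfl | hij
    · exact hSA
    · exact (disjoint_part hij).mono hS (hp.subset_part j)
  have houter := (le_phi_iff hd hne).1 (hA.le_phi_of_disjoint S hne hdisj)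
  simpa using houter.trans (hp.eW_univ_le hS hSA)

lemma IsCorePartition.mul_vol_sdiff_le (hs : ∀ u v, w u v = w v u) (hn : ∀ u v, 0 ≤ w u v)
    (hd : ∀ v, 0 < deg w v) (hA : IsCoreSystem w A r R) (hp : IsCorePartition w A p)
    (hS : S ⊆ part p i) :
    R * vol w (S \ A i)
      ≤ k * (crossWeight w (S \ A i) (part p i \ S) + eW w (A i ∩ S) univ) := by
  refine (hp.mul_vol_le_of_disjoint hd hA (sdiff_subset.trans hS) sdiff_disjoint).trans ?_
  have hpart : part p i \ (S \ A i) = part p i \ S ∪ A i ∩ S := by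
    have := hp.subset_part i
    grind
  have hdisj : Disjoint (part p i \ S) (A i ∩ S) := sdiff_disjoint.mono_right inter_subset_right
  rw [eW_eq_crossWeight, hpart, crossWeight_union_right _ hdisj,
    crossWeight_comm hs _ (A i ∩ S)]
  gcongr
  exact crossWeight_le_eW_univ hn (disjoint_sdiff.mono_left inter_subset_left)

lemma IsCorePartition.mul_vol_le_of_le_phi_inter (hs : ∀ u v, w u v = w v u)
    (hn : ∀ u v, 0 ≤ w u v) (hd : ∀ v, 0 < deg w v) (hA : IsCoreSystem w A r R)
    (hp : IsCorePartition w A p) (hε : 0 ≤ ε) (hε1 : ε ≤ 1) (hgap : (1 + ε) * r ≤ R)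
    (hS : S ⊆ part p i) (hinter : (A i ∩ S).Nonempty) (hdiff : (A i \ S).Nonempty)
    (hR : R ≤ phi w (A i ∩ S)) :
    ε * R * vol w S ≤ 8 * k * eW w S (part p i) := by
  set B := A i ∩ S
  set C := A i \ S
  set O := S \ A i
  set Y := part p i \ S
  have hk : (1 : ℝ) ≤ k := by exact_mod_cast i.pos
  have hBC : Disjoint B C := disjoint_sdiff.mono_left inter_subset_right
  have hOB : Disjoint O B := disjoint_sdiff.symm.mono_right inter_subset_left
  have hOS : O ∪ B = S := by grind
  have hCA : C ⊂ A i := by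
    simpa only [sdiff_inter_self_left] using sdiff_ssubset (inter_subset_left (s₂ := S)) hinter
  have hcore : ε * eW w B univ ≤ 4 * crossWeight w B C := by
    refine mul_eW_univ_le_crossWeight hs hn hd hinter hdiff hBC hε hε1 hgap ?_ ?_ hR
    · rw [show B ∪ C = A i by grind]
      exact hA.phi_le i
    · exact (hA.lt_phi_of_ssubset i C hCA hdiff).le
  have hB : R * vol w B ≤ eW w B univ := (le_phi_iff hd hinter).1 hR
  have hO : R * vol w O ≤ k * (crossWeight w O Y + eW w B univ) :=
    hp.mul_vol_sdiff_le hs hn hd hA hS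
  have hcut : crossWeight w O Y + crossWeight w B C ≤ eW w S (part p i) := by
    rw [eW_eq_crossWeight, ← hOS, crossWeight_union_left hOB, hOS]
    gcongr
    exact crossWeight_mono hn Subset.rfl (sdiff_subset_sdiff (hp.subset_part i) Subset.rfl)
  have hOY : ε * crossWeight w O Y ≤ crossWeight w O Y :=
    mul_le_of_le_one_left (crossWeight_nonneg hn O Y) hε1
  calc ε * R * vol w S
      = ε * (R * vol w O) + ε * (R * vol w B) := by
        rw [← hOS, vol_union hOB]
        ring
    _ ≤ ε * (k * (crossWeight w O Y + eW w B univ)) + ε * eW w B univ := by gcongr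
    _ = k * (ε * crossWeight w O Y + ε * eW w B univ) + ε * eW w B univ := by ring
    _ ≤ k * (crossWeight w O Y + 4 * crossWeight w B C) + 4 * crossWeight w B C :=
        add_le_add (mul_le_mul_of_nonneg_left (add_le_add hOY hcore) k.cast_nonneg) hcore
    _ ≤ 8 * k * (crossWeight w O Y + crossWeight w B C) := by
        linarith [mul_nonneg (k.cast_nonneg (α := ℝ)) (crossWeight_nonneg hn O Y),
          mul_nonneg (sub_nonneg.2 hk) (crossWeight_nonneg hn B C)]
    _ ≤ 8 * k * eW w S (part p i) := by gcongr

lemma IsCorePartition.expands (hs : ∀ u v, w u v = w v u) (hn : ∀ u v, 0 ≤ w u v)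
    (hd : ∀ v, 0 < deg w v) (hA : IsCoreSystem w A r R) (hp : IsCorePartition w A p)
    (hR : 0 ≤ R) (hε : 0 ≤ ε) (hε1 : ε ≤ 1) (hgap : (1 + ε) * r ≤ R) (i : Fin k) :
    Expands w (part p i) (ε * R / (8 * k)) := by
  intro S hS
  have hk : (1 : ℝ) ≤ k := by exact_mod_cast i.pos
  have hweaken {T : Finset V} (hT : R * vol w T ≤ k * eW w T (part p i)) :
      ε * R * vol w T ≤ 8 * k * eW w T (part p i) := by
    have hvol := mul_le_of_le_one_left (mul_nonneg hR (vol_nonneg hd T)) hε1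
    linarith [mul_nonneg (zero_le_one.trans hk) (eW_nonneg hn T (part p i))]
  suffices hside : ε * R * vol w S ≤ 8 * k * eW w S (part p i) ∨
      ε * R * vol w (part p i \ S) ≤ 8 * k * eW w (part p i \ S) (part p i) by
    rw [div_mul_eq_mul_div, div_le_iff₀' (by positivity)]
    rcases hside with hle | hle
    · exact (mul_le_mul_of_nonneg_left (min_le_left _ _) (mul_nonneg hε hR)).trans hle
    · rw [eW_sdiff_self hs hS] at hle
      exact (mul_le_mul_of_nonneg_left (min_le_right _ _) (mul_nonneg hε hR)).trans hle
  have hsub := hp.subset_part i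
  have hinter : A i ∩ (part p i \ S) = A i \ S := by grind
  have hdiff : A i \ (part p i \ S) = A i ∩ S := by grind
  rcases (A i ∩ S).eq_empty_or_nonempty with hempty | hne
  · exact .inl (hweaken (hp.mul_vol_le_of_disjoint hd hA hS
      (disjoint_iff_inter_eq_empty.2 hempty).symm))
  rcases (A i \ S).eq_empty_or_nonempty with hempty | hne'
  · exact .inr (hweaken (hp.mul_vol_le_of_disjoint hd hA sdiff_subset
      (disjoint_iff_inter_eq_empty.2 (hinter.trans hempty)).symm))
  have hssub : A i ∩ S ⊂ A i := ⟨inter_subset_left, fun h => by grind⟩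
  rcases hA.le_phi_or_le_phi_sdiff i _ hssub hne with hle | hle
  · exact .inl (hp.mul_vol_le_of_le_phi_inter hs hn hd hA hε hε1 hgap hS hne hne' hle)
  · rw [sdiff_inter_self_left, ← hinter] at hle
    exact .inr (hp.mul_vol_le_of_le_phi_inter hs hn hd hA hε hε1 hgap sdiff_subset
      (hinter ▸ hne') (hdiff ▸ hne) hle)

lemma exists_expanding_partition (hs : ∀ u v, w u v = w v u) (hn : ∀ u v, 0 ≤ w u v)
    (hd : ∀ v, 0 < deg w v) (hk : 1 ≤ k) (hkV : k ≤ Fintype.card V) (hε : 0 < ε) (hε1 : ε ≤ 1)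
    (hgap : (1 + ε) * rho w k ≤ rho w (k + 1)) :
    ∃ p : V → Fin k, (∀ i, (part p i).Nonempty) ∧ (∀ i, phi w (part p i) ≤ k * rho w k) ∧
      ∀ i, Expands w (part p i) (ε * rho w (k + 1) / (8 * k)) := by
  have : Nonempty (Fin k) := ⟨⟨0, hk⟩⟩
  obtain ⟨A, hA⟩ := exists_isCoreSystem hn hd hkV hε hgap
  obtain ⟨p, hp⟩ := hA.toIsPacking.exists_isCorePartition hs
  refine ⟨p, fun i => (hA.nonempty i).mono (hp.subset_part i), fun i => ?_,
    hp.expands hs hn hd hA (rho_nonneg hn hd _) hε.le hε1 hgap⟩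
  simpa using hp.phi_part_le hs hn hd (hA.nonempty i) (hA.phi_le i)

end CoreExpansion

section HigherOrderCheeger

variable {V : Type*} [Fintype V] [DecidableEq V] {w : V → V → ℝ}

lemma rho_succ_le (hs : ∀ u v, w u v = w v u) (hn : ∀ u v, 0 ≤ w u v) (hd : ∀ v, 0 < deg w v)
    {j : ℕ} (hj : 1 ≤ j) (hjV : j + 1 ≤ Fintype.card V) {ε : ℝ} (hε : 0 < ε) (hε1 : ε ≤ 1) :
    rho w (j + 1) ≤ max ((1 + ε) * rho w j) (12 * j / ε * √(lam w (j + 1))) := by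
  rw [le_max_iff]
  refine (le_total _ _).imp_right fun hgap => ?_
  obtain ⟨p, -, -, hp⟩ := exists_expanding_partition hs hn hd hj (by omega) hε hε1 hgap
  have hj0 : (j : ℝ) ≠ 0 := by exact_mod_cast (by omega : j ≠ 0)
  have hrho := rho_nonneg hn hd (j + 1)
  set α := ε * rho w (j + 1) / (8 * j) with hα
  have hα0 : 0 ≤ α := by positivity
  have hlam : α ^ 2 / 2 ≤ lam w (j + 1) := sq_div_two_le_lam hs hn hd hα0 hp (by simp) hjV
  have hsqrt : 2 / 3 * α ≤ √(lam w (j + 1)) :=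
    Real.le_sqrt_of_sq_le (by linarith [sq_nonneg α])
  calc rho w (j + 1) = 12 * j / ε * (2 / 3 * α) := by
        rw [hα]
        field_simp [hj0]
        ring
    _ ≤ 12 * j / ε * √(lam w (j + 1)) := by gcongr

lemma rho_one_nonpos [Nonempty V] : rho w 1 ≤ 0 := by
  have huniv : IsPacking fun _ : Fin 1 => (univ : Finset V) :=
    ⟨fun _ => univ_nonempty, fun i j hij => (hij (Subsingleton.elim i j)).elim⟩
  obtain ⟨_, hle⟩ := huniv.exists_rho_le_phi (w := w) le_rfl
  simpa [phi, eW] using hle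

lemma rho_le_mul_sq_mul_sqrt_lam (hs : ∀ u v, w u v = w v u) (hn : ∀ u v, 0 ≤ w u v)
    (hd : ∀ v, 0 < deg w v) {k : ℕ} (hk : 1 ≤ k) (hkV : k ≤ Fintype.card V) :
    rho w k ≤ 36 * k ^ 2 * √(lam w k) := by
  have : Nonempty V := Fintype.card_pos_iff.1 (by omega)
  have hk0 : (1 : ℝ) ≤ k := by exact_mod_cast hk
  have hchain (j : ℕ) (hj : 1 ≤ j) (hjk : j ≤ k) :
      rho w j ≤ (1 + 1 / k : ℝ) ^ j * (12 * k ^ 2 * √(lam w k)) := by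
    induction j, hj using Nat.le_induction with
    | base => exact rho_one_nonpos.trans (by positivity)
    | succ j hj ih =>
      refine (rho_succ_le hs hn hd hj (by omega) (ε := 1 / k) (by positivity)
        ((div_le_one (by positivity)).2 hk0)).trans (max_le ?_ ?_)
      · rw [pow_succ', mul_assoc]
        gcongr
        exact ih (by omega)
      · calc 12 * j / (1 / k : ℝ) * √(lam w (j + 1))
            ≤ 12 * k / (1 / k) * √(lam w k) := by
              have hjk' : (j : ℝ) ≤ k := by exact_mod_cast Nat.le_of_succ_le hjk
              have hlam := lam_mono hs (by omega : 1 ≤ j + 1) hjk hkV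
              gcongr
          _ = 12 * k ^ 2 * √(lam w k) := by
              field_simp
          _ ≤ (1 + 1 / k : ℝ) ^ (j + 1) * (12 * k ^ 2 * √(lam w k)) :=
              le_mul_of_one_le_left (by positivity)
                (one_le_pow₀ (le_add_of_nonneg_right (by positivity)))
  have hexp : (1 + 1 / k : ℝ) ^ k ≤ 3 :=
    calc (1 + 1 / k : ℝ) ^ k ≤ Real.exp (1 / k) ^ k := by
          gcongr
          linarith [Real.add_one_le_exp (1 / k : ℝ)]
      _ = Real.exp 1 := by
          rw [← Real.exp_nat_mul, mul_one_div_cancel (by positivity)]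
      _ ≤ 3 := by linarith [Real.exp_one_lt_d9]
  calc rho w k ≤ (1 + 1 / k : ℝ) ^ k * (12 * k ^ 2 * √(lam w k)) := hchain k hk le_rfl
    _ ≤ 3 * (12 * k ^ 2 * √(lam w k)) := by gcongr
    _ = 36 * k ^ 2 * √(lam w k) := by ring

end HigherOrderCheeger

theorem stmt3 :
    ∃ c₁ c₂ c₃ : ℝ, 0 < c₁ ∧ 0 < c₂ ∧ 0 < c₃ ∧
      ∀ (V : Type) [Fintype V] [DecidableEq V] (w : V → V → ℝ),
        (∀ u v, w u v = w v u) → (∀ u v, 0 ≤ w u v) → (∀ v, 0 < deg w v) →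
        ∀ k : ℕ, 1 ≤ k → k + 1 ≤ Fintype.card V →
        c₁ * (k : ℝ) ^ 2 * Real.sqrt (lam w k) ≤ lam w (k + 1) →
        ∃ P : Fin k → Finset V, (∀ i, (P i).Nonempty) ∧
          (∀ i j, i ≠ j → Disjoint (P i) (P j)) ∧
          (∀ v : V, ∃ i, v ∈ P i) ∧
          (∀ i, inCondGE w (P i) (c₂ * lam w (k + 1) / (k : ℝ)) ∧
            phi w (P i) ≤ c₃ * (k : ℝ) ^ 3 * Real.sqrt (lam w k)) := by
  refine ⟨144, 1 / 16, 36, by norm_num, by norm_num, by norm_num, ?_⟩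
  intro V _ _ w hs hn hd k hk hkV hlam
  have heasy : lam w (k + 1) ≤ 2 * rho w (k + 1) := lam_le_two_mul_rho hs hn hd (by omega) hkV
  have hhard : rho w k ≤ 36 * k ^ 2 * √(lam w k) :=
    rho_le_mul_sq_mul_sqrt_lam hs hn hd hk (by omega)
  obtain ⟨p, hne, hphi, hexp⟩ :=
    exists_expanding_partition hs hn hd hk (by omega) one_pos le_rfl (by linarith)
  refine ⟨part p, hne, fun _ _ => disjoint_part, fun v => ⟨p v, mem_part.2 rfl⟩,
    fun i => ⟨((hexp i).mono hd ?_).inCondGE hn ?_, (hphi i).trans ?_⟩⟩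
  · calc 1 / 16 * lam w (k + 1) / k ≤ 1 / 16 * (2 * rho w (k + 1)) / k := by gcongr
      _ = 1 * rho w (k + 1) / (8 * k) := by ring
  · exact div_nonneg (mul_nonneg (by norm_num) (hlam.trans' (by positivity))) k.cast_nonneg
  · calc k * rho w k ≤ k * (36 * k ^ 2 * √(lam w k)) := by gcongr
      _ = 36 * k ^ 3 * √(lam w k) := by ring
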